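/- With Q, q, q^c_η as above, ‖q^c_η − q‖²_{L²(ℝⁿ)} ≤ √(2π)ⁿ · N(Q) · (Σ_I a_I² I!) · e^{−(1/2)(c/(2η))²}, where N(Q) is the number of monomials of Q. -/

import Mathlib

open scoped RealInnerProductSpace

noncomputable section

/-- The Fourier transform with the convention `F(f)(ξ) = ∫ e^{-i⟨x,ξ⟩} f(x) dx`. -/
def Fn {n : ℕ} (f : EuclideanSpace ℝ (Fin n) → ℂ) (ξ : EuclideanSpace ℝ (Fin n)) : ℂ :=
  ∫ x : EuclideanSpace ℝ (Fin n), Complex.exp (-Complex.I * (⟪x, ξ⟫ : ℝ)) * f x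

/-!
By Plancherel and the inversion formula, the squared error is `(2π)⁻ⁿ` times the integral of
`‖F(q)‖²` over the region where the cutoff differs from `1`, hence over `‖ξ‖ > R = c / (2η)`.
The Fourier transform of `x^I e^{-‖x‖²/2}` is `√(2π)ⁿ (-i)^|I| He_I(ξ) e^{-‖ξ‖²/2}`, and
Cauchy–Schwarz bounds the square of the sum over the monomials by `N(Q)` times the sum of the
squares. Of the two Gaussian factors in each square, one is at most `e^{-R²/2}` for `‖ξ‖ > R`; the
other is the weight for which the Hermite polynomials are orthogonal, with `‖He_k‖² = k! √(2π)`.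
-/

open MeasureTheory FourierTransform Polynomial ProbabilityTheory
open scoped Nat SchwartzMap

section Plancherel

variable {V F : Type*} [NormedAddCommGroup V] [InnerProductSpace ℝ V] [FiniteDimensional ℝ V]
  [MeasurableSpace V] [BorelSpace V]

lemma integral_fourier_smul_eq_integral_smul_fourier [NormedAddCommGroup F] [NormedSpace ℂ F]
    [CompleteSpace F] {f : V → ℂ} {g : V → F} (hf : Integrable f) (hg : Integrable g) :
    ∫ ξ, 𝓕 f ξ • g ξ = ∫ x, f x • 𝓕 g x := by
  simpa using! VectorFourier.integral_fourierIntegral_smul_eq_flip (L := innerₗ V)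
    Real.continuous_fourierChar continuous_inner hf hg

lemma continuous_fourier_of_integrable [NormedAddCommGroup F] [NormedSpace ℂ F] {g : V → F}
    (hg : Integrable g) : Continuous (𝓕 g) :=
  VectorFourier.fourierIntegral_continuous Real.continuous_fourierChar continuous_inner hg

variable [NormedAddCommGroup F] [InnerProductSpace ℂ F] [CompleteSpace F]

lemma coeFn_fourier_toLp_two {g : V → F} (hg : Integrable g) (hg₂ : MemLp g 2) :
    (𝓕 (hg₂.toLp g) : Lp F 2 (volume : Measure V)) =ᵐ[volume] 𝓕 g := by
  -- The `L²` transform agrees with the distributional one, so both sides pair equally with test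
  -- functions.
  refine ae_eq_of_integral_contDiff_smul_eq ((Lp.memLp _).locallyIntegrable one_le_two)
    (continuous_fourier_of_integrable hg).locallyIntegrable fun u hu huc ↦ ?_
  let ψ : 𝓢(V, ℂ) := HasCompactSupport.toSchwartzMap (f := fun x ↦ (u x : ℂ))
    (huc.comp_left Complex.ofReal_zero) (Complex.ofRealCLM.contDiff.comp hu)
  have hcoe (x : V) (v : F) : u x • v = ψ x • v := (Complex.coe_smul (u x) v).symm
  have hL2 := DFunLike.congr_fun (Lp.fourier_toTemperedDistribution_eq (hg₂.toLp g)) ψ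
  rw [TemperedDistribution.fourier_apply, Lp.toTemperedDistribution_apply,
    Lp.toTemperedDistribution_apply] at hL2
  simp_rw [hcoe]
  calc ∫ x, ψ x • (𝓕 (hg₂.toLp g) : Lp F 2 (volume : Measure V)) x
      = ∫ ξ, 𝓕 ψ ξ • hg₂.toLp g ξ := hL2.symm
    _ = ∫ ξ, 𝓕 (ψ : V → ℂ) ξ • g ξ := by
        refine integral_congr_ae ?_
        filter_upwards [hg₂.coeFn_toLp] with ξ hξ
        rw [hξ, SchwartzMap.fourier_coe]
    _ = ∫ x, ψ x • 𝓕 g x := integral_fourier_smul_eq_integral_smul_fourier ψ.integrable hg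

lemma eLpNorm_two_fourier {g : V → F} (hg : Integrable g) (hg₂ : MemLp g 2) :
    eLpNorm (𝓕 g) 2 volume = eLpNorm g 2 volume := by
  have hnorm := Lp.norm_fourier_eq (hg₂.toLp g)
  rw [Lp.norm_def, Lp.norm_toLp, eLpNorm_congr_ae (coeFn_fourier_toLp_two hg hg₂)] at hnorm
  refine (ENNReal.toReal_eq_toReal_iff' ?_ hg₂.eLpNorm_ne_top).1 hnorm
  rw [← eLpNorm_congr_ae (coeFn_fourier_toLp_two hg hg₂)]
  exact Lp.eLpNorm_ne_top _

lemma integral_norm_sq_eq_toReal_eLpNorm_sq {α E : Type*} [MeasurableSpace α] {μ : Measure α}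
    [NormedAddCommGroup E] {f : α → E} (hf : AEStronglyMeasurable f μ) :
    ∫ x, ‖f x‖ ^ 2 ∂μ = (eLpNorm f 2 μ).toReal ^ 2 := by
  have hnonneg : 0 ≤ ∫ x, ‖f x‖ ^ 2 ∂μ := integral_nonneg fun x ↦ sq_nonneg _
  rw [toReal_eLpNorm hf, lpNorm_eq_integral_norm_rpow_toReal two_ne_zero ENNReal.ofNat_ne_top hf]
  simp only [ENNReal.toReal_ofNat, Real.rpow_ofNat]
  rw [← Real.rpow_natCast, ← Real.rpow_mul hnonneg]
  simp

lemma integral_norm_sq_fourierInv {g : V → F} (hg : Integrable g) (hg₂ : MemLp g 2) :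
    ∫ x, ‖𝓕⁻ g x‖ ^ 2 = ∫ ξ, ‖g ξ‖ ^ 2 := by
  simp_rw [Real.fourierInv_eq_fourier_neg]
  rw [integral_neg_eq_self (fun x ↦ ‖𝓕 g x‖ ^ 2),
    integral_norm_sq_eq_toReal_eLpNorm_sq
      (continuous_fourier_of_integrable hg).aestronglyMeasurable,
    integral_norm_sq_eq_toReal_eLpNorm_sq hg.aestronglyMeasurable, eLpNorm_two_fourier hg hg₂]

end Plancherel

section AngularFrequency

variable {n : ℕ}

/-- The inverse of `Fn`, in the same angular-frequency normalization:
`F⁻¹(g)(x) = (2π)⁻ⁿ ∫ e^{i⟨x,ξ⟩} g(ξ) dξ`. -/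
def invFn (g : EuclideanSpace ℝ (Fin n) → ℂ) (x : EuclideanSpace ℝ (Fin n)) : ℂ :=
  (1 / (2 * Real.pi) ^ n) *
    ∫ ξ : EuclideanSpace ℝ (Fin n), g ξ * Complex.exp (Complex.I * (⟪x, ξ⟫ : ℝ))

lemma fourier_eq_Fn_two_pi_smul (f : EuclideanSpace ℝ (Fin n) → ℂ)
    (ζ : EuclideanSpace ℝ (Fin n)) : 𝓕 f ζ = Fn f ((2 * Real.pi) • ζ) := by
  rw [Real.fourier_eq', Fn]
  refine integral_congr_ae (.of_forall fun x ↦ ?_)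
  simp only [smul_eq_mul, real_inner_smul_right]
  congr 2
  push_cast
  ring

lemma integral_comp_two_pi_smul {E : Type*} [NormedAddCommGroup E] [NormedSpace ℝ E]
    (g : EuclideanSpace ℝ (Fin n) → E) :
    ∫ ζ, g ((2 * Real.pi) • ζ) = (1 / (2 * Real.pi) ^ n : ℝ) • ∫ ξ, g ξ := by
  rw [Measure.integral_comp_smul, finrank_euclideanSpace_fin, one_div,
    abs_of_pos (inv_pos.2 (pow_pos Real.two_pi_pos n))]

lemma invFn_eq_fourierInv (g : EuclideanSpace ℝ (Fin n) → ℂ) (x : EuclideanSpace ℝ (Fin n)) :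
    invFn g x = 𝓕⁻ (fun ζ ↦ g ((2 * Real.pi) • ζ)) x := by
  rw [Real.fourierInv_eq']
  calc invFn g x
      = (1 / (2 * Real.pi) ^ n : ℝ) •
          ∫ ξ, g ξ * Complex.exp (Complex.I * (⟪x, ξ⟫ : ℝ)) := by
        rw [invFn, Complex.real_smul]
        push_cast
        rfl
    _ = ∫ ζ, g ((2 * Real.pi) • ζ) *
          Complex.exp (Complex.I * (⟪x, (2 * Real.pi) • ζ⟫ : ℝ)) :=
        (integral_comp_two_pi_smul fun ξ ↦
          g ξ * Complex.exp (Complex.I * (⟪x, ξ⟫ : ℝ))).symm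
    _ = ∫ ζ, Complex.exp ((2 * Real.pi * ⟪ζ, x⟫ : ℝ) * Complex.I) • g ((2 * Real.pi) • ζ) := by
        simp only [smul_eq_mul, real_inner_smul_right, real_inner_comm, mul_comm]

lemma invFn_Fn {f : EuclideanSpace ℝ (Fin n) → ℂ} (hcont : Continuous f) (hf : Integrable f)
    (hFf : Integrable (Fn f)) : invFn (Fn f) = f := by
  have hfourier : 𝓕 f = fun ζ ↦ Fn f ((2 * Real.pi) • ζ) := funext (fourier_eq_Fn_two_pi_smul f)
  funext x
  rw [invFn_eq_fourierInv, ← hfourier, hcont.fourierInv_fourier_eq hf]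
  rw [hfourier]
  exact hFf.comp_smul Real.two_pi_pos.ne'

lemma invFn_sub {g h : EuclideanSpace ℝ (Fin n) → ℂ} (hg : Integrable g) (hh : Integrable h)
    (x : EuclideanSpace ℝ (Fin n)) : invFn g x - invFn h x = invFn (g - h) x := by
  have hint {u : EuclideanSpace ℝ (Fin n) → ℂ} (hu : Integrable u) :
      Integrable fun ξ ↦ u ξ * Complex.exp (Complex.I * (⟪x, ξ⟫ : ℝ)) :=
    hu.mul_bdd (c := 1) (by fun_prop) (.of_forall fun ξ ↦ (Complex.norm_exp_I_mul_ofReal _).le)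
  simp only [invFn, Pi.sub_apply, sub_mul, ← mul_sub, integral_sub (hint hg) (hint hh)]

lemma integral_norm_sq_invFn {g : EuclideanSpace ℝ (Fin n) → ℂ} (hg : Integrable g)
    (hg₂ : MemLp g 2) :
    ∫ x, ‖invFn g x‖ ^ 2 = 1 / (2 * Real.pi) ^ n * ∫ ξ, ‖g ξ‖ ^ 2 := by
  have hscaled := hg.comp_smul Real.two_pi_pos.ne'
  have hscaled₂ : MemLp (fun ζ ↦ g ((2 * Real.pi) • ζ)) 2 :=
    (memLp_two_iff_integrable_sq_norm hscaled.aestronglyMeasurable).2 <|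
      (memLp_two_iff_integrable_sq_norm hg.aestronglyMeasurable).1 hg₂ |>.comp_smul
        Real.two_pi_pos.ne'
  simp_rw [invFn_eq_fourierInv]
  rw [integral_norm_sq_fourierInv hscaled hscaled₂,
    integral_comp_two_pi_smul (fun ξ ↦ ‖g ξ‖ ^ 2), smul_eq_mul]

lemma integral_norm_sq_invFn_mul_Fn_sub_le {f m : EuclideanSpace ℝ (Fin n) → ℂ}
    {s : Set (EuclideanSpace ℝ (Fin n))} (hcont : Continuous f) (hf : Integrable f)
    (hFf : Integrable (Fn f)) (hFf₂ : MemLp (Fn f) 2) (hm : AEStronglyMeasurable m)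
    (hm_le : ∀ ξ, ‖m ξ - 1‖ ≤ 1) (hm_one : ∀ ξ ∈ s, m ξ = 1) :
    ∫ x, ‖invFn (fun ξ ↦ m ξ * Fn f ξ) x - f x‖ ^ 2 ≤
      1 / (2 * Real.pi) ^ n * ∫ ξ in sᶜ, ‖Fn f ξ‖ ^ 2 := by
  set err : EuclideanSpace ℝ (Fin n) → ℂ := fun ξ ↦ (m ξ - 1) * Fn f ξ with herr_def
  have hm_meas : AEStronglyMeasurable fun ξ ↦ m ξ - 1 := hm.sub aestronglyMeasurable_const
  have herr_le (ξ) : ‖err ξ‖ ≤ ‖Fn f ξ‖ := by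
    simpa only [herr_def, norm_mul] using
      mul_le_of_le_one_left (norm_nonneg (Fn f ξ)) (hm_le ξ)
  have herr : Integrable err := hFf.mono (hm_meas.mul hFf.aestronglyMeasurable) (.of_forall herr_le)
  have herr₂ : MemLp err 2 := hFf₂.mono herr.aestronglyMeasurable (.of_forall herr_le)
  have hmul : (fun ξ ↦ m ξ * Fn f ξ) = err + Fn f := by
    funext ξ
    simp only [herr_def, Pi.add_apply]
    ring
  have hsub (x) : invFn (fun ξ ↦ m ξ * Fn f ξ) x - f x = invFn err x := by
    rw [hmul, ← congrFun (invFn_Fn hcont hf hFf) x, invFn_sub (herr.add hFf) hFf,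
      add_sub_cancel_right]
  have hzero (ξ) (hξ : ξ ∉ sᶜ) : ‖err ξ‖ ^ 2 = 0 := by
    simp [herr_def, hm_one ξ (Set.notMem_compl_iff.1 hξ)]
  simp_rw [hsub]
  rw [integral_norm_sq_invFn herr herr₂, ← setIntegral_eq_integral_of_forall_compl_eq_zero hzero]
  have hint {u : EuclideanSpace ℝ (Fin n) → ℂ} (hu : MemLp u 2) :
      IntegrableOn (fun ξ ↦ ‖u ξ‖ ^ 2) sᶜ :=
    (hu.integrable_norm_pow two_ne_zero).integrableOn
  exact mul_le_mul_of_nonneg_left (setIntegral_mono (hint herr₂) (hint hFf₂)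
    fun ξ ↦ pow_le_pow_left₀ (norm_nonneg _) (herr_le ξ) 2) (by positivity)

end AngularFrequency

section Hermite

/-- The probabilists' Hermite polynomial `He_k`, with real coefficients so that it can be evaluated
and differentiated as a real function. -/
def hermiteReal (k : ℕ) : ℝ[X] := (hermite k).map (Int.castRingHom ℝ)

lemma hermiteReal_succ (k : ℕ) :
    hermiteReal (k + 1) = X * hermiteReal k - derivative (hermiteReal k) := by
  simp [hermiteReal, hermite_succ, derivative_map]

lemma iterate_derivative_hermiteReal_self (k : ℕ) :
    derivative^[k] (hermiteReal k) = C (k ! : ℝ) := by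
  have hdeg : (derivative^[k] (hermiteReal k)).natDegree = 0 := by
    have h := natDegree_iterate_derivative (hermiteReal k) k
    have h' : (hermiteReal k).natDegree ≤ k := natDegree_map_le.trans natDegree_hermite.le
    omega
  rw [eq_C_of_natDegree_eq_zero hdeg, coeff_iterate_derivative]
  simp [hermiteReal, coeff_hermite_self, Nat.descFactorial_self]

lemma hasDerivAt_exp_neg_sq_div_two (x : ℝ) :
    HasDerivAt (fun x : ℝ ↦ Real.exp (-x ^ 2 / 2)) (-x * Real.exp (-x ^ 2 / 2)) x := by
  have h : HasDerivAt (fun x : ℝ ↦ -x ^ 2 / 2) (-x) x := by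
    simpa using! ((hasDerivAt_pow 2 x).neg.div_const 2).congr_deriv (by ring : _ = -x)
  exact h.exp.congr_deriv (mul_comm _ _)

lemma hasDerivAt_hermiteReal_mul_exp (k : ℕ) (x : ℝ) :
    HasDerivAt (fun x ↦ (hermiteReal k).eval x * Real.exp (-x ^ 2 / 2))
      (-((hermiteReal (k + 1)).eval x * Real.exp (-x ^ 2 / 2))) x := by
  refine (((hermiteReal k).hasDerivAt x).mul (hasDerivAt_exp_neg_sq_div_two x)).congr_deriv ?_
  simp only [hermiteReal_succ, eval_sub, eval_mul, eval_X]
  ring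

lemma integrable_eval_mul_exp (p : ℝ[X]) :
    Integrable fun x ↦ p.eval x * Real.exp (-x ^ 2 / 2) := by
  have hmonomial (k : ℕ) : Integrable fun x : ℝ ↦ x ^ k * Real.exp (-x ^ 2 / 2) := by
    have h := integrable_rpow_mul_exp_neg_mul_sq (b := 1 / 2) (by norm_num) (s := k)
      (neg_one_lt_zero.trans_le k.cast_nonneg)
    simpa only [Real.rpow_natCast, neg_mul, one_div_mul_eq_div, neg_div] using h
  simp_rw [eval_eq_sum_range, Finset.sum_mul, mul_assoc]
  exact integrable_finsetSum _ fun k _ ↦ (hmonomial k).const_mul _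

lemma integral_eval_mul_hermiteReal_mul_exp (p : ℝ[X]) (k : ℕ) :
    ∫ x, p.eval x * ((hermiteReal k).eval x * Real.exp (-x ^ 2 / 2)) =
      ∫ x, (derivative^[k] p).eval x * Real.exp (-x ^ 2 / 2) := by
  induction k generalizing p with
  | zero => simp [hermiteReal]
  | succ k ih =>
    have hint (r : ℝ[X]) (l : ℕ) : Integrable fun x ↦
        r.eval x * ((hermiteReal l).eval x * Real.exp (-x ^ 2 / 2)) := by
      simpa only [eval_mul, mul_assoc] using integrable_eval_mul_exp (r * hermiteReal l)
    have hparts := integral_mul_deriv_eq_deriv_mul_of_integrable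
      (fun x _ ↦ p.hasDerivAt x) (fun x _ ↦ hasDerivAt_hermiteReal_mul_exp k x)
      (by simpa only [Pi.mul_def, mul_neg] using! (hint p (k + 1)).neg) (hint _ k) (hint p k)
    simp only [mul_neg, integral_neg, neg_inj] at hparts
    rw [hparts, ih, Function.iterate_succ_apply]

lemma integral_hermiteReal_sq_mul_exp (k : ℕ) :
    ∫ x, (hermiteReal k ^ 2).eval x * Real.exp (-x ^ 2 / 2) = k ! * √(2 * Real.pi) := by
  have hgauss : ∫ x : ℝ, Real.exp (-x ^ 2 / 2) = √(2 * Real.pi) := by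
    convert integral_gaussian (1 / 2) using 3 <;> ring_nf
  simp only [pow_two (hermiteReal k), eval_mul, mul_assoc]
  simp [integral_eval_mul_hermiteReal_mul_exp, iterate_derivative_hermiteReal_self,
    integral_const_mul, hgauss]


lemma iteratedDeriv_charFun_gaussianReal (k : ℕ) (t : ℝ) :
    iteratedDeriv k (charFun (gaussianReal 0 1)) t =
      (-1) ^ k * ((hermiteReal k).eval t * Real.exp (-t ^ 2 / 2) : ℝ) := by
  induction k generalizing t with
  | zero => simp [hermiteReal, charFun_gaussianReal, neg_div]
  | succ k ih =>
    rw [iteratedDeriv_succ, funext ih,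
      (((hasDerivAt_hermiteReal_mul_exp k t).ofReal_comp).const_mul _).deriv]
    push_cast
    ring

lemma integral_pow_mul_cexp_gaussianReal (k : ℕ) (t : ℝ) :
    ∫ x, (x : ℂ) ^ k * Complex.exp (t * x * Complex.I) ∂gaussianReal 0 1 =
      Complex.I ^ k * ((hermiteReal k).eval t * Real.exp (-t ^ 2 / 2) : ℝ) := by
  have hderiv := iteratedDeriv_charFun (t := t) (memLp_id_gaussianReal (μ := 0) (v := 1) k)
  rw [iteratedDeriv_charFun_gaussianReal] at hderiv
  refine mul_left_cancel₀ (pow_ne_zero k Complex.I_ne_zero) (hderiv.symm.trans ?_)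
  rw [← mul_assoc, ← mul_pow, Complex.I_mul_I]

lemma integral_cexp_mul_pow_mul_exp (k : ℕ) (t : ℝ) :
    ∫ x : ℝ, Complex.exp (-Complex.I * (x * t : ℝ)) * (x ^ k * Real.exp (-x ^ 2 / 2) : ℝ) =
      √(2 * Real.pi) * (-Complex.I) ^ k *
        ((hermiteReal k).eval t * Real.exp (-t ^ 2 / 2) : ℝ) := by
  have hpi : (√(2 * Real.pi) : ℂ) ≠ 0 := by
    exact_mod_cast (Real.sqrt_pos.2 Real.two_pi_pos).ne'
  have hgauss := integral_pow_mul_cexp_gaussianReal k t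
  rw [integral_gaussianReal_eq_integral_smul one_ne_zero, ← integral_neg_eq_self] at hgauss
  rw [neg_pow, mul_assoc, mul_assoc, ← hgauss, ← integral_const_mul, ← integral_const_mul]
  refine integral_congr_ae (.of_forall fun x ↦ ?_)
  simp only [gaussianPDFReal, NNReal.coe_one, mul_one, sub_zero, Complex.real_smul]
  push_cast
  field_simp
  rw [← mul_pow, neg_one_mul, neg_neg]

end Hermite

section GaussianProd

variable {ι : Type*} [Fintype ι]

/-- The product of one polynomial in each coordinate, times the Gaussian `e^{-‖x‖²/2}`. Monomials
times the Gaussian and the multivariate Hermite functions are both of this form, so that the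
Fourier transform stays within it. -/
def gaussianProd (p : ι → ℝ[X]) (x : EuclideanSpace ℝ ι) : ℝ :=
  (∏ j, (p j).eval (x j)) * Real.exp (-‖x‖ ^ 2 / 2)

lemma gaussianProd_eq_prod (p : ι → ℝ[X]) (x : EuclideanSpace ℝ ι) :
    gaussianProd p x = ∏ j, (p j).eval (x j) * Real.exp (-(x j) ^ 2 / 2) := by
  rw [gaussianProd, EuclideanSpace.real_norm_sq_eq, Finset.prod_mul_distrib, ← Real.exp_sum]
  simp only [neg_div, Finset.sum_neg_distrib, Finset.sum_div]

lemma gaussianProd_sq (p : ι → ℝ[X]) (x : EuclideanSpace ℝ ι) :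
    gaussianProd p x ^ 2 = Real.exp (-‖x‖ ^ 2 / 2) * gaussianProd (p ^ 2) x := by
  simp only [gaussianProd, Pi.pow_apply, eval_pow, Finset.prod_pow]
  ring

lemma gaussianProd_pow_two_nonneg (p : ι → ℝ[X]) (x : EuclideanSpace ℝ ι) :
    0 ≤ gaussianProd (p ^ 2) x := by
  simp only [gaussianProd, Pi.pow_apply, eval_pow, Finset.prod_pow]
  positivity

lemma continuous_gaussianProd (p : ι → ℝ[X]) : Continuous (gaussianProd p) := by
  unfold gaussianProd
  fun_prop

lemma integral_prod_euclideanSpace {𝕜 : Type*} [RCLike 𝕜] (f : ι → ℝ → 𝕜) :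
    ∫ x : EuclideanSpace ℝ ι, ∏ j, f j (x j) = ∏ j, ∫ t, f j t := by
  rw [← (PiLp.volume_preserving_toLp ι).integral_comp
    (MeasurableEquiv.toLp 2 (ι → ℝ)).measurableEmbedding]
  exact integral_fintype_prod_volume_eq_prod f

lemma integrable_gaussianProd (p : ι → ℝ[X]) : Integrable (gaussianProd p) := by
  rw [funext (gaussianProd_eq_prod p), ← (PiLp.volume_preserving_toLp ι).integrable_comp_emb
    (MeasurableEquiv.toLp 2 (ι → ℝ)).measurableEmbedding]
  exact Integrable.fintype_prod fun j ↦ integrable_eval_mul_exp (p j)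

lemma integral_gaussianProd (p : ι → ℝ[X]) :
    ∫ x, gaussianProd p x = ∏ j, ∫ t, (p j).eval t * Real.exp (-t ^ 2 / 2) := by
  simp_rw [gaussianProd_eq_prod]
  exact integral_prod_euclideanSpace fun j t ↦ (p j).eval t * Real.exp (-t ^ 2 / 2)

lemma integral_gaussianProd_hermiteReal_sq (I : ι → ℕ) :
    ∫ ξ, gaussianProd ((fun j ↦ hermiteReal (I j)) ^ 2) ξ =
      √(2 * Real.pi) ^ Fintype.card ι * ∏ j, ((I j)! : ℝ) := by
  simp only [integral_gaussianProd, Pi.pow_apply, integral_hermiteReal_sq_mul_exp,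
    Finset.prod_mul_distrib, Finset.prod_const, Finset.card_univ, mul_comm]

lemma gaussianProd_sq_le {R : ℝ} (hR : 0 ≤ R) (p : ι → ℝ[X]) {x : EuclideanSpace ℝ ι}
    (hx : R ≤ ‖x‖) :
    gaussianProd p x ^ 2 ≤ Real.exp (-(1 / 2) * R ^ 2) * gaussianProd (p ^ 2) x := by
  rw [gaussianProd_sq]
  refine mul_le_mul_of_nonneg_right (Real.exp_le_exp.2 ?_) (gaussianProd_pow_two_nonneg p x)
  linarith [pow_le_pow_left₀ hR hx 2]

lemma memLp_two_gaussianProd (p : ι → ℝ[X]) : MemLp (gaussianProd p) 2 := by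
  have hmeas := (continuous_gaussianProd p).aestronglyMeasurable (μ := volume)
  refine (memLp_two_iff_integrable_sq hmeas).2 <|
    (integrable_gaussianProd (p ^ 2)).mono' (hmeas.pow 2) (.of_forall fun x ↦ ?_)
  simpa using gaussianProd_sq_le le_rfl p (norm_nonneg x)

lemma setIntegral_gaussianProd_hermiteReal_sq_le {R : ℝ} (hR : 0 ≤ R) (I : ι → ℕ) :
    ∫ ξ in (Metric.closedBall 0 R)ᶜ, gaussianProd (fun j ↦ hermiteReal (I j)) ξ ^ 2 ≤
      Real.exp (-(1 / 2) * R ^ 2) *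
        (√(2 * Real.pi) ^ Fintype.card ι * ∏ j, ((I j)! : ℝ)) := by
  set h : ι → ℝ[X] := fun j ↦ hermiteReal (I j)
  have hint : Integrable fun ξ ↦ Real.exp (-(1 / 2) * R ^ 2) * gaussianProd (h ^ 2) ξ :=
    (integrable_gaussianProd (h ^ 2)).const_mul _
  calc ∫ ξ in (Metric.closedBall 0 R)ᶜ, gaussianProd h ξ ^ 2
      ≤ ∫ ξ in (Metric.closedBall 0 R)ᶜ,
          Real.exp (-(1 / 2) * R ^ 2) * gaussianProd (h ^ 2) ξ := by
        refine setIntegral_mono_on (memLp_two_gaussianProd h).integrable_sq.integrableOn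
          hint.integrableOn Metric.isClosed_closedBall.measurableSet.compl fun ξ hξ ↦
          gaussianProd_sq_le hR h ?_
        rw [Set.mem_compl_iff, mem_closedBall_zero_iff, not_le] at hξ
        exact hξ.le
    _ ≤ ∫ ξ, Real.exp (-(1 / 2) * R ^ 2) * gaussianProd (h ^ 2) ξ :=
        setIntegral_le_integral hint (.of_forall fun ξ ↦
          mul_nonneg (Real.exp_nonneg _) (gaussianProd_pow_two_nonneg h ξ))
    _ = _ := by rw [integral_const_mul, integral_gaussianProd_hermiteReal_sq]

end GaussianProd

section PolynomialGaussian

variable {n : ℕ}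

lemma Fn_gaussianProd_X_pow (I : Fin n → ℕ) (ξ : EuclideanSpace ℝ (Fin n)) :
    Fn (fun x ↦ (gaussianProd (fun j ↦ X ^ I j) x : ℂ)) ξ =
      √(2 * Real.pi) ^ n * (-Complex.I) ^ (∑ j, I j) *
        gaussianProd (fun j ↦ hermiteReal (I j)) ξ := by
  have hkernel (x : EuclideanSpace ℝ (Fin n)) :
      Complex.exp (-Complex.I * (⟪x, ξ⟫ : ℝ)) * gaussianProd (fun j ↦ X ^ I j) x =
        ∏ j, Complex.exp (-Complex.I * (x j * ξ j : ℝ)) *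
          (x j ^ I j * Real.exp (-(x j) ^ 2 / 2) : ℝ) := by
    have hinner : ⟪x, ξ⟫ = ∑ j, x j * ξ j := by
      simp only [PiLp.inner_apply, RCLike.inner_apply, conj_trivial, mul_comm (ξ _)]
    rw [Finset.prod_mul_distrib, ← Complex.exp_sum, ← Finset.mul_sum, ← Complex.ofReal_sum,
      ← Complex.ofReal_prod, hinner, gaussianProd_eq_prod]
    simp only [eval_pow, eval_X]
  simp_rw [Fn, hkernel]
  rw [integral_prod_euclideanSpace fun j t ↦
    Complex.exp (-Complex.I * (t * ξ j : ℝ)) * (t ^ I j * Real.exp (-t ^ 2 / 2) : ℝ)]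
  simp only [integral_cexp_mul_pow_mul_exp]
  rw [Finset.prod_mul_distrib, Finset.prod_mul_distrib, Finset.prod_const, Finset.card_fin,
    Finset.prod_pow_eq_pow_sum, gaussianProd_eq_prod, Complex.ofReal_prod]

/-- The function `q = Q e^{-‖x‖²/2}` attached to the polynomial `Q = Σ_{I ∈ S} a_I x^I`, with
complex coefficients. -/
def polyGaussian (S : Finset (Fin n → ℕ)) (a : (Fin n → ℕ) → ℂ)
    (x : EuclideanSpace ℝ (Fin n)) : ℂ :=
  (∑ I ∈ S, a I * ∏ j, (x j : ℂ) ^ I j) * Real.exp (-‖x‖ ^ 2 / 2)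

variable (S : Finset (Fin n → ℕ)) (a : (Fin n → ℕ) → ℂ)

lemma polyGaussian_eq_sum (x : EuclideanSpace ℝ (Fin n)) :
    polyGaussian S a x = ∑ I ∈ S, a I * gaussianProd (fun j ↦ X ^ I j) x := by
  simp [polyGaussian, gaussianProd, Finset.sum_mul, mul_assoc]

lemma continuous_polyGaussian : Continuous (polyGaussian S a) := by
  unfold polyGaussian
  fun_prop

lemma integrable_polyGaussian : Integrable (polyGaussian S a) := by
  rw [funext (polyGaussian_eq_sum S a)]
  exact integrable_finsetSum _ fun I _ ↦ (integrable_gaussianProd _).ofReal.const_mul _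

lemma Fn_polyGaussian (ξ : EuclideanSpace ℝ (Fin n)) :
    Fn (polyGaussian S a) ξ = √(2 * Real.pi) ^ n *
      ∑ I ∈ S, a I * (-Complex.I) ^ (∑ j, I j) * gaussianProd (fun j ↦ hermiteReal (I j)) ξ := by
  have hint (I : Fin n → ℕ) : Integrable fun x : EuclideanSpace ℝ (Fin n) ↦
      Complex.exp (-Complex.I * (⟪x, ξ⟫ : ℝ)) * (a I * gaussianProd (fun j ↦ X ^ I j) x) :=
    ((integrable_gaussianProd _).ofReal.const_mul (a I)).bdd_mul (c := 1) (by fun_prop)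
      (.of_forall fun x ↦ by simp [Complex.norm_exp])
  simp_rw [Fn, polyGaussian_eq_sum, Finset.mul_sum]
  rw [integral_finsetSum _ fun I _ ↦ hint I]
  refine Finset.sum_congr rfl fun I _ ↦ ?_
  simp_rw [mul_left_comm _ (a I)]
  rw [integral_const_mul, ← Fn, Fn_gaussianProd_X_pow]
  ring

lemma integrable_Fn_polyGaussian : Integrable (Fn (polyGaussian S a)) := by
  rw [funext (Fn_polyGaussian S a)]
  exact (integrable_finsetSum _ fun I _ ↦
    (integrable_gaussianProd _).ofReal.const_mul _).const_mul _

lemma memLp_two_Fn_polyGaussian : MemLp (Fn (polyGaussian S a)) 2 := by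
  rw [funext (Fn_polyGaussian S a)]
  have hhermite (I : Fin n → ℕ) :=
    (memLp_two_gaussianProd fun j ↦ hermiteReal (I j)).ofReal (K := ℂ)
  exact (memLp_finsetSum S fun I _ ↦ (hhermite I).const_mul _).const_mul _

lemma norm_sq_Fn_polyGaussian_le (ξ : EuclideanSpace ℝ (Fin n)) :
    ‖Fn (polyGaussian S a) ξ‖ ^ 2 ≤ (2 * Real.pi) ^ n * (S.card *
      ∑ I ∈ S, ‖a I‖ ^ 2 * gaussianProd (fun j ↦ hermiteReal (I j)) ξ ^ 2) := by
  have hterm (I : Fin n → ℕ) : ‖a I * (-Complex.I) ^ (∑ j, I j) *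
      gaussianProd (fun j ↦ hermiteReal (I j)) ξ‖ ^ 2 =
        ‖a I‖ ^ 2 * gaussianProd (fun j ↦ hermiteReal (I j)) ξ ^ 2 := by
    simp [mul_pow]
  have hconst : ‖(√(2 * Real.pi) ^ n : ℂ)‖ ^ 2 = (2 * Real.pi) ^ n := by
    rw [norm_pow, Complex.norm_real, pow_right_comm, Real.norm_eq_abs, sq_abs,
      Real.sq_sqrt Real.two_pi_pos.le]
  rw [Fn_polyGaussian, norm_mul, mul_pow, hconst]
  gcongr
  simp_rw [← hterm]
  exact (pow_le_pow_left₀ (norm_nonneg _) (norm_sum_le _ _) 2).trans sq_sum_le_card_mul_sum_sq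

lemma setIntegral_norm_sq_Fn_polyGaussian_le {R : ℝ} (hR : 0 ≤ R) :
    ∫ ξ in (Metric.closedBall 0 R)ᶜ, ‖Fn (polyGaussian S a) ξ‖ ^ 2 ≤
      (2 * Real.pi) ^ n * (√(2 * Real.pi) ^ n * S.card *
        (∑ I ∈ S, ‖a I‖ ^ 2 * ∏ j, ((I j)! : ℝ)) * Real.exp (-(1 / 2) * R ^ 2)) := by
  have hint (I : Fin n → ℕ) : IntegrableOn
      (fun ξ ↦ ‖a I‖ ^ 2 * gaussianProd (fun j ↦ hermiteReal (I j)) ξ ^ 2)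
      (Metric.closedBall 0 R)ᶜ :=
    ((memLp_two_gaussianProd _).integrable_sq.const_mul _).integrableOn
  calc ∫ ξ in (Metric.closedBall 0 R)ᶜ, ‖Fn (polyGaussian S a) ξ‖ ^ 2
      ≤ ∫ ξ in (Metric.closedBall 0 R)ᶜ, (2 * Real.pi) ^ n * (S.card *
          ∑ I ∈ S, ‖a I‖ ^ 2 * gaussianProd (fun j ↦ hermiteReal (I j)) ξ ^ 2) :=
        setIntegral_mono
          ((memLp_two_Fn_polyGaussian S a).integrable_norm_pow two_ne_zero).integrableOn
          (((integrable_finsetSum _ fun I _ ↦ hint I).const_mul _).const_mul _)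
          (norm_sq_Fn_polyGaussian_le S a)
    _ = (2 * Real.pi) ^ n * (S.card * ∑ I ∈ S, ‖a I‖ ^ 2 *
          ∫ ξ in (Metric.closedBall 0 R)ᶜ, gaussianProd (fun j ↦ hermiteReal (I j)) ξ ^ 2) := by
        rw [integral_const_mul, integral_const_mul, integral_finsetSum _ fun I _ ↦ hint I]
        simp only [integral_const_mul]
    _ ≤ (2 * Real.pi) ^ n * (S.card * ∑ I ∈ S, ‖a I‖ ^ 2 * (Real.exp (-(1 / 2) * R ^ 2) *
          (√(2 * Real.pi) ^ n * ∏ j, ((I j)! : ℝ)))) := by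
        gcongr with I
        simpa using setIntegral_gaussianProd_hermiteReal_sq_le hR I
    _ = _ := by
        simp only [Finset.mul_sum, Finset.sum_mul]
        refine Finset.sum_congr rfl fun I _ ↦ ?_
        ring

end PolynomialGaussian

section Cutoff

variable {n : ℕ}

lemma ofReal_sum_mul_exp_eq_polyGaussian (S : Finset (Fin n → ℕ)) (a : (Fin n → ℕ) → ℝ)
    (x : EuclideanSpace ℝ (Fin n)) :
    (((∑ I ∈ S, a I * ∏ j, x j ^ I j) * Real.exp (-‖x‖ ^ 2 / 2) : ℝ) : ℂ) =
      polyGaussian S (fun I ↦ (a I : ℂ)) x := by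
  simp [polyGaussian]

lemma norm_ofReal_sub_one_le_one {t : ℝ} (ht : t ∈ Set.Icc (0 : ℝ) 1) : ‖(t : ℂ) - 1‖ ≤ 1 := by
  rw [← Complex.ofReal_one, ← Complex.ofReal_sub, Complex.norm_real, Real.norm_eq_abs, abs_le]
  constructor <;> linarith [ht.1, ht.2]

theorem stmt11_general (S : Finset (Fin n → ℕ)) (a : (Fin n → ℕ) → ℂ) {c η : ℝ} (hc : 0 ≤ c)
    (hη : 0 < η) {χ : EuclideanSpace ℝ (Fin n) → ℂ} (hχ : Measurable χ)
    (hχ_le : ∀ ξ, ‖χ ξ - 1‖ ≤ 1) (hχ_one : ∀ ξ ∈ Metric.closedBall 0 (c / 2), χ ξ = 1) :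
    ∫ x, ‖invFn (fun ξ ↦ χ (η • ξ) * Fn (polyGaussian S a) ξ) x - polyGaussian S a x‖ ^ 2 ≤
      √(2 * Real.pi) ^ n * S.card * (∑ I ∈ S, ‖a I‖ ^ 2 * ∏ j, ((I j)! : ℝ)) *
        Real.exp (-(1 / 2) * (c / (2 * η)) ^ 2) := by
  have hm_one : ∀ ξ ∈ Metric.closedBall 0 (c / (2 * η)), χ (η • ξ) = 1 := by
    intro ξ hξ
    refine hχ_one _ ?_
    rw [mem_closedBall_zero_iff] at hξ ⊢
    calc ‖η • ξ‖ = η * ‖ξ‖ := norm_smul_of_nonneg hη.le ξ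
      _ ≤ η * (c / (2 * η)) := by gcongr
      _ = c / 2 := by field_simp
  have herror := integral_norm_sq_invFn_mul_Fn_sub_le (continuous_polyGaussian S a)
    (integrable_polyGaussian S a) (integrable_Fn_polyGaussian S a) (memLp_two_Fn_polyGaussian S a)
    (hχ.comp (measurable_const_smul η)).aestronglyMeasurable (fun ξ ↦ hχ_le (η • ξ)) hm_one
  refine herror.trans ?_
  rw [one_div_mul_eq_div, div_le_iff₀' (pow_pos Real.two_pi_pos n)]
  exact setIntegral_norm_sq_Fn_polyGaussian_le S a (by positivity)

end Cutoff

/-- `L²` bound on `q^c_η − q` where `q = Q e^{-‖x‖²/2}` for a polynomial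
`Q = Σ_{I ∈ S} a_I x^I` and `q^c_η = F⁻¹(χ̃_c(ηξ) F(q))`. -/
theorem stmt11 (n : ℕ) (hn : 0 < n)
    (S : Finset (Fin n → ℕ)) (a : (Fin n → ℕ) → ℝ)
    (c η : ℝ) (hc : 0 < c) (hη : 0 < η) (hcη : 1 ≤ c / (2 * η))
    (χ : EuclideanSpace ℝ (Fin n) → ℝ) (hχ : ContDiff ℝ (⊤ : ℕ∞) χ)
    (hχ01 : ∀ ξ, χ ξ ∈ Set.Icc (0:ℝ) 1)
    (hχsupp : tsupport χ ⊆ Metric.closedBall 0 c)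
    (hχ1 : ∀ ξ ∈ Metric.closedBall (0 : EuclideanSpace ℝ (Fin n)) (c / 2), χ ξ = 1)
    (Q q : EuclideanSpace ℝ (Fin n) → ℝ)
    (hQ : Q = fun x => ∑ I ∈ S, a I * ∏ j, x j ^ I j)
    (hq : q = fun x => Q x * Real.exp (-‖x‖ ^ 2 / 2))
    (qcη : EuclideanSpace ℝ (Fin n) → ℂ)
    (hqcη : qcη = fun x => (1 / (2 * Real.pi) ^ n) *
      ∫ ξ : EuclideanSpace ℝ (Fin n),
        (χ (η • ξ) : ℂ) * Fn (fun y => (q y : ℂ)) ξ * Complex.exp (Complex.I * (⟪x, ξ⟫ : ℝ))) :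
    (∫ x : EuclideanSpace ℝ (Fin n), ‖qcη x - (q x : ℂ)‖ ^ 2) ≤
      Real.sqrt (2 * Real.pi) ^ n * (S.card : ℝ) *
        (∑ I ∈ S, (a I) ^ 2 * ∏ j, (Nat.factorial (I j) : ℝ)) *
        Real.exp (-(1 / 2) * (c / (2 * η)) ^ 2) := by
  subst hQ hq hqcη
  simp only [ofReal_sum_mul_exp_eq_polyGaussian]
  simpa [invFn] using stmt11_general S (fun I ↦ (a I : ℂ)) hc.le hη (χ := fun ξ ↦ (χ ξ : ℂ))
    (Complex.measurable_ofReal.comp hχ.continuous.measurable)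
    (fun ξ ↦ norm_ofReal_sub_one_le_one (hχ01 ξ)) fun ξ hξ ↦ by simp [hχ1 ξ hξ]

end
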